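/- Let β̂ be the elastic-net estimator and β* ∈ ℝ^p be nonzero with support H = {j : β*_j ≠ 0} and d* = |H|. Let ζ > 1 and assume ‖ℓ̇(β*) + 2λ₂·β*‖_∞ ≤ ((ζ−1)/(ζ+1))·λ₁, assume C(ζ,H,ℓ̈(β*)) > 0, and set τ = K·(ζ+1)·d*·λ₁ / (2·C(ζ,H,ℓ̈(β*))²). If τ ≤ (1/2)·e^{−1} and a_τ ∈ [0, 1/2] satisfies a_τ·exp(−2a_τ) = τ, then ‖β̂ − β*‖₁ ≤ exp(2a_τ)·(ζ+1)·d*·λ₁ / (2·C(ζ,H,ℓ̈(β*))²). -/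

import Mathlib

open Real BigOperators Finset MeasureTheory

/-- Inner product of a row of the design matrix with a coefficient vector. -/
def dotp {p : ℕ} (u v : Fin p → ℝ) : ℝ := ∑ j, u j * v j

/-- Average negative binomial negative log-likelihood. -/
noncomputable def negLogLik (n p : ℕ) (θ : ℝ) (x : Fin n → Fin p → ℝ)
    (y : Fin n → ℝ) (β : Fin p → ℝ) : ℝ :=
  -(1 / (n : ℝ)) *
    ∑ i, (y i * dotp (x i) β - (θ + y i) * Real.log (θ + Real.exp (dotp (x i) β)))

/-- Elastic-net objective function. -/
noncomputable def enObj (n p : ℕ) (θ : ℝ) (x : Fin n → Fin p → ℝ) (y : Fin n → ℝ)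
    (lam1 lam2 : ℝ) (β : Fin p → ℝ) : ℝ :=
  negLogLik n p θ x y β + lam1 * ∑ j, |β j| + lam2 * ∑ j, (β j) ^ 2

/-- `j`-th component of the gradient of the average negative log-likelihood. -/
noncomputable def gradComp (n p : ℕ) (θ : ℝ) (x : Fin n → Fin p → ℝ) (y : Fin n → ℝ)
    (β : Fin p → ℝ) (j : Fin p) : ℝ :=
  (1 / (n : ℝ)) *
    ∑ i, x i j * θ * (Real.exp (dotp (x i) β) - y i) / (θ + Real.exp (dotp (x i) β))

/-- The quadratic form `bᵀ ℓ̈(β) b` of the Hessian of the average negative log-likelihood. -/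
noncomputable def hessQuad (n p : ℕ) (θ : ℝ) (x : Fin n → Fin p → ℝ) (y : Fin n → ℝ)
    (β b : Fin p → ℝ) : ℝ :=
  (1 / (n : ℝ)) *
    ∑ i, (dotp (x i) b) ^ 2 *
      (θ * (θ + y i) * Real.exp (dotp (x i) β) / (θ + Real.exp (dotp (x i) β)) ^ 2)

/-- The compatibility factor `C(ζ,H,Σ)` of the quadratic form `Q = bᵀΣb`,
over the cone `S(ζ,H) = {b : ‖b_{Hᶜ}‖₁ ≤ ζ‖b_H‖₁}`. -/
noncomputable def compatFactor (p : ℕ) (ζ : ℝ) (H : Finset (Fin p))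
    (Q : (Fin p → ℝ) → ℝ) : ℝ :=
  sInf {r : ℝ | ∃ b : Fin p → ℝ, b ≠ 0 ∧
    (∑ j ∈ Hᶜ, |b j|) ≤ ζ * ∑ j ∈ H, |b j| ∧
    r = Real.sqrt ((H.card : ℝ) * Q b) / ∑ j ∈ H, |b j|}


noncomputable def hfun (θ y u : ℝ) : ℝ := θ * (Real.exp u - y) / (θ + Real.exp u)

lemma hfun_sub (θ y u v : ℝ) (hθ : 0 < θ) :
    hfun θ y v - hfun θ y u
      = θ * (θ + y) * (Real.exp v - Real.exp u) / ((θ + Real.exp u) * (θ + Real.exp v)) := by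
  have h1 := Real.exp_pos u
  have h2 := Real.exp_pos v
  have h3 : θ + Real.exp u ≠ 0 := by positivity
  have h4 : θ + Real.exp v ≠ 0 := by positivity
  unfold hfun
  field_simp
  ring

lemma hfun_mono (θ y : ℝ) (hθ : 0 < θ) (hy : 0 ≤ y) : Monotone (hfun θ y) := by
  intro u v huv
  have h := hfun_sub θ y u v hθ
  have h1 := Real.exp_pos u
  have h2 := Real.exp_pos v
  have h3 : 0 ≤ Real.exp v - Real.exp u := sub_nonneg.2 (Real.exp_le_exp.2 huv)
  have : 0 ≤ hfun θ y v - hfun θ y u := by rw [h]; positivity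
  linarith

lemma hfun_line (θ y u d t : ℝ) (hθ : 0 < θ) (hy : 0 ≤ y) (ht : t ≤ 1) :
    (hfun θ y (u + t * d) - hfun θ y u) * d ≤ (hfun θ y (u + d) - hfun θ y u) * d := by
  rcases le_total 0 d with hd | hd
  · have := hfun_mono θ y hθ hy (show u + t * d ≤ u + d by nlinarith)
    nlinarith
  · have := hfun_mono θ y hθ hy (show u + d ≤ u + t * d by nlinarith)
    nlinarith

lemma ratio_lower (θ E d : ℝ) (hθ : 0 < θ) (hE : 0 < E) :
    Real.exp (-|d|) * d ^ 2 ≤ d * (Real.exp d - 1) * (θ + E) / (θ + E * Real.exp d) := by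
  have hp := Real.exp_pos d
  rw [le_div_iff₀ (by positivity)]
  rcases le_total 0 d with hd | hd
  · rw [abs_of_nonneg hd]
    have h1 : d ≤ Real.exp d - 1 := by linarith [Real.add_one_le_exp d]
    have h2 : Real.exp (-d) * (θ + E * Real.exp d) ≤ θ + E := by
      have h3 : Real.exp (-d) * Real.exp d = 1 := by rw [← Real.exp_add]; simp
      have h4 : Real.exp (-d) ≤ 1 := Real.exp_le_one_iff.2 (by linarith)
      nlinarith
    calc Real.exp (-d) * d ^ 2 * (θ + E * Real.exp d)
        = d * d * (Real.exp (-d) * (θ + E * Real.exp d)) := by ring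
      _ ≤ d * d * (θ + E) := by gcongr
      _ ≤ d * (Real.exp d - 1) * (θ + E) := by gcongr
  · rw [abs_of_nonpos hd, neg_neg]
    have h1 : -d * Real.exp d ≤ 1 - Real.exp d := by
      have h3 : Real.exp (-d) * Real.exp d = 1 := by rw [← Real.exp_add]; simp
      have h4 := Real.add_one_le_exp (-d)
      nlinarith
    have h2 : θ + E * Real.exp d ≤ θ + E := by
      have h4 : Real.exp d ≤ 1 := Real.exp_le_one_iff.2 (by linarith)
      nlinarith
    have h5 : 0 ≤ -d := by linarith
    calc Real.exp d * d ^ 2 * (θ + E * Real.exp d)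
        ≤ Real.exp d * d ^ 2 * (θ + E) := by gcongr
      _ = (-d) * ((-d) * Real.exp d) * (θ + E) := by ring
      _ ≤ (-d) * (1 - Real.exp d) * (θ + E) := by gcongr
      _ = d * (Real.exp d - 1) * (θ + E) := by ring

lemma hfun_lower (θ y u d : ℝ) (hθ : 0 < θ) (hy : 0 ≤ y) :
    Real.exp (-|d|) * (d ^ 2 * (θ * (θ + y) * Real.exp u / (θ + Real.exp u) ^ 2))
      ≤ (hfun θ y (u + d) - hfun θ y u) * d := by
  rw [hfun_sub θ y u _ hθ, Real.exp_add]
  have hu := Real.exp_pos u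
  have hd := Real.exp_pos d
  have h := ratio_lower θ (Real.exp u) d hθ hu
  have hw : 0 ≤ θ * (θ + y) * Real.exp u / (θ + Real.exp u) ^ 2 := by positivity
  have h' := mul_le_mul_of_nonneg_right h hw
  have h3 : θ + Real.exp u ≠ 0 := by positivity
  have h4 : θ + Real.exp u * Real.exp d ≠ 0 := by positivity
  calc _ = _ := by ring
    _ ≤ _ := h'
    _ = _ := by field_simp

lemma dotp_line {p : ℕ} (u v b : Fin p → ℝ) (t : ℝ) :
    dotp u (fun j => v j + t * b j) = dotp u v + t * dotp u b := by
  unfold dotp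
  rw [Finset.mul_sum, ← Finset.sum_add_distrib]
  exact Finset.sum_congr rfl fun j _ => by ring

lemma lik_deriv (θ y u d : ℝ) (hθ : 0 < θ) :
    HasDerivAt (fun t : ℝ => y * (u + t * d) - (θ + y) * Real.log (θ + Real.exp (u + t * d)))
      (-(hfun θ y u * d)) 0 := by
  have h1 : HasDerivAt (fun t : ℝ => u + t * d) d 0 := by
    simpa using ((hasDerivAt_id (0:ℝ)).mul_const d).const_add u
  have hne : θ + Real.exp (u + 0 * d) ≠ 0 := by positivity
  have h2 := (h1.const_mul y).sub (((h1.exp.const_add θ).log hne).const_mul (θ + y))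
  refine h2.congr_deriv ?_
  unfold hfun
  simp only [zero_mul, add_zero] at hne ⊢
  field_simp
  ring

lemma negLogLik_deriv (n p : ℕ) (θ : ℝ) (hθ : 0 < θ) (x : Fin n → Fin p → ℝ)
    (y : Fin n → ℝ) (β b : Fin p → ℝ) :
    HasDerivAt (fun t : ℝ => negLogLik n p θ x y (fun j => β j + t * b j))
      ((1 / (n : ℝ)) * ∑ i, hfun θ (y i) (dotp (x i) β) * dotp (x i) b) 0 := by
  unfold negLogLik
  simp only [dotp_line]
  have h := (HasDerivAt.fun_sum (u := Finset.univ) (fun i _ =>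
    lik_deriv θ (y i) (dotp (x i) β) (dotp (x i) b) hθ)).const_mul (-(1 / (n : ℝ)))
  refine h.congr_deriv ?_
  rw [Finset.sum_neg_distrib]; ring

lemma sq_deriv (p : ℕ) (β b : Fin p → ℝ) :
    HasDerivAt (fun t : ℝ => ∑ j, (β j + t * b j) ^ 2) (∑ j, 2 * β j * b j) 0 := by
  refine HasDerivAt.fun_sum (fun j _ => ?_)
  have h1 : HasDerivAt (fun t : ℝ => β j + t * b j) (b j) 0 := by
    simpa using ((hasDerivAt_id (0:ℝ)).mul_const (b j)).const_add (β j)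
  refine (h1.pow 2).congr_deriv ?_
  simp

lemma deriv_nonneg_of_min (ψ : ℝ → ℝ) (d : ℝ) (h : HasDerivAt ψ d 0)
    (hm : ∀ t, 0 ≤ t → t ≤ 1 → ψ 0 ≤ ψ t) : 0 ≤ d := by
  have h1 := (hasDerivAt_iff_tendsto_slope.1 h).mono_left
    (nhdsWithin_mono (0:ℝ) (s := Set.Ioi 0) (fun z hz => ne_of_gt hz))
  refine ge_of_tendsto h1 ?_
  filter_upwards [Ioo_mem_nhdsGT (show (0:ℝ) < 1 by norm_num)] with t ht
  rw [slope_def_field]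
  have := hm t ht.1.le ht.2.le
  exact div_nonneg (by linarith) (by linarith [ht.1])

lemma gradComp_dot (n p : ℕ) (θ : ℝ) (x : Fin n → Fin p → ℝ)
    (y : Fin n → ℝ) (β b : Fin p → ℝ) :
    ∑ j, gradComp n p θ x y β j * b j
      = (1 / (n : ℝ)) * ∑ i, hfun θ (y i) (dotp (x i) β) * dotp (x i) b := by
  unfold gradComp hfun
  simp only [mul_assoc, ← Finset.mul_sum]
  simp only [Finset.sum_mul, mul_assoc, ← Finset.mul_sum]
  congr 1
  rw [Finset.sum_comm]
  refine Finset.sum_congr rfl fun i _ => ?_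
  have e : dotp (x i) b = ∑ j, x i j * b j := rfl
  rw [e, Finset.mul_sum]
  exact Finset.sum_congr rfl fun j _ => by ring

/-- First-order condition at the minimizer. -/
lemma kkt (n p : ℕ) (θ : ℝ) (hθ : 0 < θ)
    (x : Fin n → Fin p → ℝ) (y : Fin n → ℝ)
    (lam1 lam2 : ℝ) (hlam1 : 0 < lam1)
    (betah : Fin p → ℝ)
    (hmin : ∀ β : Fin p → ℝ,
      enObj n p θ x y lam1 lam2 betah ≤ enObj n p θ x y lam1 lam2 β)
    (b : Fin p → ℝ) :
    0 ≤ (1 / (n : ℝ)) * ∑ i, hfun θ (y i) (dotp (x i) betah) * dotp (x i) b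
      + lam1 * (∑ j, |betah j + b j| - ∑ j, |betah j|) + lam2 * ∑ j, 2 * betah j * b j := by
  have hl : HasDerivAt (fun t : ℝ => t * (∑ j, |betah j + b j| - ∑ j, |betah j|))
      (∑ j, |betah j + b j| - ∑ j, |betah j|) 0 := by
    simpa using (hasDerivAt_id (0:ℝ)).mul_const (∑ j, |betah j + b j| - ∑ j, |betah j|)
  have hd := ((negLogLik_deriv n p θ hθ x y betah b).add (hl.const_mul lam1)).add
    ((sq_deriv p betah b).const_mul lam2)
  refine deriv_nonneg_of_min _ _ hd ?_
  intro t ht0 ht1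
  have h := hmin (fun j => betah j + t * b j)
  have hc : ∑ j, |betah j + t * b j| ≤
      ∑ j, |betah j| + t * (∑ j, |betah j + b j| - ∑ j, |betah j|) := by
    rw [← Finset.sum_sub_distrib, Finset.mul_sum, ← Finset.sum_add_distrib]
    refine Finset.sum_le_sum fun j _ => ?_
    have e : betah j + t * b j = (1 - t) * betah j + t * (betah j + b j) := by ring
    have h1 := abs_add_le ((1 - t) * betah j) (t * (betah j + b j))
    rw [← e, abs_mul, abs_mul, abs_of_nonneg ht0, abs_of_nonneg (sub_nonneg.2 ht1)] at h1
    linarith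
  have hc' := mul_le_mul_of_nonneg_left hc hlam1.le
  unfold enObj at h
  simp only [Pi.add_apply, zero_mul, mul_zero, add_zero]
  linarith

lemma compat_le (p : ℕ) (ζ : ℝ) (H : Finset (Fin p)) (Q : (Fin p → ℝ) → ℝ) (b : Fin p → ℝ)
    (hb : b ≠ 0) (hcone : (∑ j ∈ Hᶜ, |b j|) ≤ ζ * ∑ j ∈ H, |b j|) :
    compatFactor p ζ H Q ≤ Real.sqrt ((H.card : ℝ) * Q b) / ∑ j ∈ H, |b j| := by
  unfold compatFactor
  refine csInf_le ⟨0, ?_⟩ ⟨b, hb, hcone, rfl⟩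
  rintro r ⟨c, -, -, rfl⟩
  exact div_nonneg (Real.sqrt_nonneg _) (Finset.sum_nonneg fun j _ => abs_nonneg _)

theorem stmt5
    (n p : ℕ) (hn : 1 ≤ n) (hp : 1 ≤ p)
    (θ : ℝ) (hθ : 0 < θ)
    (x : Fin n → Fin p → ℝ) (y : Fin n → ℝ) (hy : ∀ i, 0 ≤ y i)
    (lam1 lam2 : ℝ) (hlam1 : 0 < lam1) (hlam2 : 0 < lam2)
    (betah : Fin p → ℝ)
    (hmin : ∀ β : Fin p → ℝ,
      enObj n p θ x y lam1 lam2 betah ≤ enObj n p θ x y lam1 lam2 β)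
    (betas : Fin p → ℝ) (hbs : betas ≠ 0)
    (H : Finset (Fin p)) (hH : H = Finset.univ.filter (fun j => betas j ≠ 0))
    (K : ℝ) (hKub : ∀ i j, |x i j| ≤ K) (hKmax : ∃ i j, |x i j| = K)
    (ζ : ℝ) (hζ : 1 < ζ)
    (hevent : ∀ j, |gradComp n p θ x y betas j + 2 * lam2 * betas j|
        ≤ (ζ - 1) / (ζ + 1) * lam1)
    (Cf : ℝ) (hCf : Cf = compatFactor p ζ H (hessQuad n p θ x y betas))
    (hCfpos : 0 < Cf)
    (τ : ℝ) (hτ : τ = K * (ζ + 1) * (H.card : ℝ) * lam1 / (2 * Cf ^ 2))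
    (hτle : τ ≤ (1 / 2) * Real.exp (-1))
    (aτ : ℝ) (haτ0 : 0 ≤ aτ) (haτ2 : aτ ≤ 1 / 2)
    (haτeq : aτ * Real.exp (-2 * aτ) = τ) :
    ∑ j, |betah j - betas j|
      ≤ Real.exp (2 * aτ) * (ζ + 1) * (H.card : ℝ) * lam1 / (2 * Cf ^ 2) := by
  have hn' : (0:ℝ) < n := by exact_mod_cast hn
  have hK0 : 0 ≤ K := by
    obtain ⟨i, j, h⟩ := hKmax
    rw [← h]; exact abs_nonneg _
  have hcard : (0:ℝ) < H.card := by
    have : H.Nonempty := by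
      obtain ⟨j, hj⟩ := Function.ne_iff.1 hbs
      exact ⟨j, by rw [hH]; simpa using hj⟩
    exact_mod_cast this.card_pos
  have hz1 : 0 < ζ + 1 := by linarith
  set B : ℝ := (ζ + 1) * (H.card : ℝ) * lam1 / (2 * Cf ^ 2) with hB
  have hBpos : 0 < B := by positivity
  have hτB : τ = K * B := by rw [hτ, hB]; ring
  have hgoal : Real.exp (2 * aτ) * (ζ + 1) * (H.card : ℝ) * lam1 / (2 * Cf ^ 2)
      = Real.exp (2 * aτ) * B := by rw [hB]; ring
  rw [hgoal]
  obtain ⟨b, hbdef⟩ : ∃ b : Fin p → ℝ, b = fun j => betah j - betas j := ⟨_, rfl⟩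
  have hbj : ∀ j, betah j - betas j = b j := fun j => by rw [hbdef]
  simp only [hbj]
  obtain ⟨L, hL⟩ : ∃ L, L = ∑ j, |b j| := ⟨_, rfl⟩
  obtain ⟨S, hS⟩ : ∃ S, S = ∑ j ∈ H, |b j| := ⟨_, rfl⟩
  obtain ⟨T, hT⟩ : ∃ T, T = ∑ j ∈ Hᶜ, |b j| := ⟨_, rfl⟩
  have hLST : L = S + T := by
    rw [hL, hS, hT]; exact (Finset.sum_add_sum_compl H _).symm
  have hS0 : 0 ≤ S := hS ▸ Finset.sum_nonneg fun j _ => abs_nonneg _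
  have hT0 : 0 ≤ T := hT ▸ Finset.sum_nonneg fun j _ => abs_nonneg _
  rw [← hL]
  by_cases hb0 : b = 0
  · have : L = 0 := by rw [hL, hb0]; simp
    rw [this]; positivity
  -- first-order condition
  have hk := kkt n p θ hθ x y lam1 lam2 hlam1 betah hmin (fun j => -b j)
  have hneg : ∀ i, dotp (x i) (fun j => -b j) = -dotp (x i) b := fun i => by
    simp [dotp]
  have hdot : ∀ i, dotp (x i) betah = dotp (x i) betas + dotp (x i) b := fun i => by
    have h := dotp_line (x i) betas b 1
    rw [one_mul] at h
    rw [← h]; congr 1; funext j; rw [← hbj]; ring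
  have hback : ∀ j, betah j + -b j = betas j := fun j => by rw [← hbj]; ring
  simp only [hneg, hback, hdot] at hk
  have hl1 : ∑ j, |betas j| - ∑ j, |betah j| ≤ S - T := by
    rw [← Finset.sum_add_sum_compl H (fun j => |betas j|),
      ← Finset.sum_add_sum_compl H (fun j => |betah j|)]
    have e1 : ∑ j ∈ H, |betas j| ≤ ∑ j ∈ H, |betah j| + S := by
      rw [hS, ← Finset.sum_add_distrib]
      refine Finset.sum_le_sum fun j _ => ?_
      have h := abs_sub_abs_le_abs_sub (betas j) (betah j)
      rw [abs_sub_comm, hbj] at h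
      linarith
    have e2 : ∑ j ∈ Hᶜ, |betas j| = 0 := by
      refine Finset.sum_eq_zero fun j hj => ?_
      rw [hH] at hj
      simpa using hj
    have e3 : ∑ j ∈ Hᶜ, |betah j| = T := by
      rw [hT]
      refine Finset.sum_congr rfl fun j hj => ?_
      have h0 : betas j = 0 := by
        rw [hH] at hj
        simpa using hj
      rw [← hbj, h0, sub_zero]
    linarith
  have hg : -((ζ - 1) / (ζ + 1) * lam1 * L)
      ≤ ∑ j, (gradComp n p θ x y betas j + 2 * lam2 * betas j) * b j := by
    rw [hL, Finset.mul_sum, ← Finset.sum_neg_distrib]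
    refine Finset.sum_le_sum fun j _ => ?_
    have h1 := mul_le_mul_of_nonneg_right (hevent j) (abs_nonneg (b j))
    rw [← abs_mul] at h1
    linarith [neg_abs_le ((gradComp n p θ x y betas j + 2 * lam2 * betas j) * b j)]
  have hg2 : ∑ j, (gradComp n p θ x y betas j + 2 * lam2 * betas j) * b j
      = (1 / (n : ℝ)) * ∑ i, hfun θ (y i) (dotp (x i) betas) * dotp (x i) b
        + 2 * lam2 * ∑ j, betas j * b j := by
    rw [← gradComp_dot, Finset.mul_sum, ← Finset.sum_add_distrib]
    exact Finset.sum_congr rfl fun j _ => by ring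
  have hq : lam2 * ∑ j, 2 * betah j * -b j ≤ -(2 * lam2 * ∑ j, betas j * b j) := by
    rw [Finset.mul_sum, Finset.mul_sum, ← Finset.sum_neg_distrib]
    refine Finset.sum_le_sum fun j _ => ?_
    have : betah j = betas j + b j := by rw [← hbj]; ring
    rw [this]
    nlinarith [mul_nonneg hlam2.le (sq_nonneg (b j))]
  have hD1 : (1 / (n : ℝ)) * ∑ i, (hfun θ (y i) (dotp (x i) betas + dotp (x i) b)
      - hfun θ (y i) (dotp (x i) betas)) * dotp (x i) b
      ≤ lam1 * (2 * S - 2 * L / (ζ + 1)) := by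
    have hl1' := mul_le_mul_of_nonneg_left hl1 hlam1.le
    have e : ∑ i, (hfun θ (y i) (dotp (x i) betas + dotp (x i) b)
      - hfun θ (y i) (dotp (x i) betas)) * dotp (x i) b
      = ∑ i, hfun θ (y i) (dotp (x i) betas + dotp (x i) b) * dotp (x i) b
        - ∑ i, hfun θ (y i) (dotp (x i) betas) * dotp (x i) b := by
      rw [← Finset.sum_sub_distrib]
      exact Finset.sum_congr rfl fun i _ => by ring
    have e2 : ∑ i, hfun θ (y i) (dotp (x i) betas + dotp (x i) b) * -dotp (x i) b
        = -∑ i, hfun θ (y i) (dotp (x i) betas + dotp (x i) b) * dotp (x i) b := by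
      rw [← Finset.sum_neg_distrib]
      exact Finset.sum_congr rfl fun i _ => by ring
    have e3 : lam1 * (2 * S - 2 * L / (ζ + 1))
        = lam1 * (S - T) + (ζ - 1) / (ζ + 1) * lam1 * L := by
      rw [hLST]; field_simp; ring
    rw [e, e3, mul_sub]
    rw [e2] at hk
    linarith
  -- bound along the segment
  have hdb : ∀ i, |dotp (x i) b| ≤ K * L := fun i => by
    rw [hL, dotp, Finset.mul_sum]
    refine (Finset.abs_sum_le_sum_abs _ _).trans (Finset.sum_le_sum fun j _ => ?_)
    rw [abs_mul]
    exact mul_le_mul_of_nonneg_right (hKub i j) (abs_nonneg _)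
  have hQ0 : 0 ≤ hessQuad n p θ x y betas b := by
    unfold hessQuad
    refine mul_nonneg (by positivity) (Finset.sum_nonneg fun i _ => ?_)
    have := hy i
    positivity
  have hseg : ∀ t : ℝ, 0 < t → t ≤ 1 →
      t * Real.exp (-(t * (K * L))) * hessQuad n p θ x y betas b
        ≤ lam1 * (2 * S - 2 * L / (ζ + 1)) := by
    intro t ht0 ht1
    refine le_trans ?_ hD1
    unfold hessQuad
    rw [mul_left_comm, Finset.mul_sum]
    refine mul_le_mul_of_nonneg_left (Finset.sum_le_sum fun i _ => ?_) (by positivity)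
    refine le_trans ?_ (hfun_line θ (y i) _ _ t hθ (hy i) ht1)
    have h := hfun_lower θ (y i) (dotp (x i) betas) (t * dotp (x i) b) hθ (hy i)
    have he : Real.exp (-(t * (K * L))) ≤ Real.exp (-|t * dotp (x i) b|) := by
      apply Real.exp_le_exp.2
      rw [abs_mul, abs_of_pos ht0]
      have := mul_le_mul_of_nonneg_left (hdb i) ht0.le
      linarith
    have hw : 0 ≤ (t * dotp (x i) b) ^ 2 * (θ * (θ + y i) * Real.exp (dotp (x i) betas)
        / (θ + Real.exp (dotp (x i) betas)) ^ 2) := by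
      have := hy i
      positivity
    have h2 := (mul_le_mul_of_nonneg_right he hw).trans h
    refine le_of_mul_le_mul_left ?_ ht0
    linarith
  have hLpos : 0 < L := by
    obtain ⟨j, hj⟩ := Function.ne_iff.1 hb0
    rw [hL]
    exact Finset.sum_pos' (fun j _ => abs_nonneg _) ⟨j, Finset.mem_univ _, abs_pos.2 hj⟩
  have hbase : 0 ≤ 2 * S - 2 * L / (ζ + 1) := by
    have h := hseg 1 one_pos le_rfl
    have h0 : 0 ≤ 1 * Real.exp (-(1 * (K * L))) * hessQuad n p θ x y betas b := by positivity
    exact nonneg_of_mul_nonneg_right (h0.trans h) hlam1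
  have hLS : L ≤ (ζ + 1) * S := by
    have h : 2 * L / (ζ + 1) ≤ 2 * S := by linarith
    rw [div_le_iff₀ hz1] at h
    linarith
  have hSpos : 0 < S := by
    by_contra hcon
    have : S = 0 := le_antisymm (not_lt.1 hcon) hS0
    rw [this] at hLS
    linarith
  have hcone : T ≤ ζ * S := by linarith
  have hcf := compat_le p ζ H (hessQuad n p θ x y betas) b hb0 (by rw [← hS, ← hT]; exact hcone)
  rw [← hCf, ← hS, le_div_iff₀ hSpos] at hcf
  have hQ : Cf ^ 2 * S ^ 2 ≤ H.card * hessQuad n p θ x y betas b := by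
    have h := pow_le_pow_left₀ (by positivity) hcf 2
    rw [Real.sq_sqrt (by positivity), mul_pow] at h
    exact h
  have hkey : ∀ t : ℝ, 0 < t → t ≤ 1 → t * L * Real.exp (-(t * (K * L))) ≤ B := by
    intro t ht0 ht1
    have h := hseg t ht0 ht1
    have hE := Real.exp_pos (-(t * (K * L)))
    set E := Real.exp (-(t * (K * L)))
    have h1 : t * E * (Cf ^ 2 * S ^ 2) ≤ H.card * (lam1 * (2 * S - 2 * L / (ζ + 1))) := by
      calc t * E * (Cf ^ 2 * S ^ 2) ≤ t * E * (H.card * hessQuad n p θ x y betas b) := by gcongr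
        _ = H.card * (t * E * hessQuad n p θ x y betas b) := by ring
        _ ≤ _ := by gcongr
    have h2 : L * (2 * S - 2 * L / (ζ + 1)) ≤ (ζ + 1) / 2 * S ^ 2 := by
      have e : (ζ + 1) / 2 * S ^ 2 - L * (2 * S - 2 * L / (ζ + 1))
          = ((ζ + 1) * S - 2 * L) ^ 2 / (2 * (ζ + 1)) := by
        field_simp; ring
      have : 0 ≤ ((ζ + 1) * S - 2 * L) ^ 2 / (2 * (ζ + 1)) := by positivity
      linarith
    rw [hB, le_div_iff₀ (by positivity)]
    have h3 : (t * L * E * (2 * Cf ^ 2)) * S ^ 2 ≤ ((ζ + 1) * H.card * lam1) * S ^ 2 := by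
      calc (t * L * E * (2 * Cf ^ 2)) * S ^ 2 = 2 * L * (t * E * (Cf ^ 2 * S ^ 2)) := by ring
        _ ≤ 2 * L * (H.card * (lam1 * (2 * S - 2 * L / (ζ + 1)))) := by gcongr
        _ = 2 * H.card * lam1 * (L * (2 * S - 2 * L / (ζ + 1))) := by ring
        _ ≤ 2 * H.card * lam1 * ((ζ + 1) / 2 * S ^ 2) := by gcongr
        _ = _ := by ring
    exact le_of_mul_le_mul_right h3 (by positivity)
  have hKL : K * L ≤ aτ := by
    by_contra hcon
    push Not at hcon
    have hKpos : 0 < K := by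
      rcases hK0.lt_or_eq with h | h
      · exact h
      · rw [← h] at hcon; linarith
    have hτpos : 0 < τ := by rw [hτB]; positivity
    have hapos : 0 < aτ := by
      rcases haτ0.lt_or_eq with h | h
      · exact h
      · rw [← h] at haτeq; linarith
    have hKLpos : 0 < K * L := by positivity
    have h := hkey (aτ / (K * L)) (by positivity) ((div_le_one hKLpos).2 hcon.le)
    have e : aτ / (K * L) * (K * L) = aτ := by field_simp
    rw [e] at h
    have h2 := mul_le_mul_of_nonneg_left h hK0
    rw [← hτB, ← haτeq] at h2
    have e2 : K * (aτ / (K * L) * L * Real.exp (-aτ)) = aτ * Real.exp (-aτ) := by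
      field_simp
    rw [e2] at h2
    have h3 := le_of_mul_le_mul_left h2 hapos
    rw [Real.exp_le_exp] at h3
    linarith
  have hfin := hkey 1 one_pos le_rfl
  rw [one_mul, one_mul] at hfin
  have h1 : Real.exp (-(2 * aτ)) ≤ Real.exp (-(K * L)) := Real.exp_le_exp.2 (by linarith)
  have h2 : L * Real.exp (-(2 * aτ)) ≤ B :=
    (mul_le_mul_of_nonneg_left h1 hLpos.le).trans hfin
  have h3 : Real.exp (2 * aτ) * Real.exp (-(2 * aτ)) = 1 := by rw [← Real.exp_add]; simp
  calc L = Real.exp (2 * aτ) * (L * Real.exp (-(2 * aτ))) := by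
        rw [mul_left_comm, h3, mul_one]
    _ ≤ Real.exp (2 * aτ) * B := by gcongr
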